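/- (Theorem 2: the min-small-change policy enables fully loaded IFDMA systems.) Let m be a natural number and let N_1, …, N_K be powers of two (each at most 2^m) with ∑_{k=1}^K N_k ≤ 2^m, presented in an arbitrary order. Then there exist pairwise disjoint aligned blocks A_1, …, A_K ⊆ {0,1,…,2^m−1} with |A_k| = N_k for each k, such that for every k ∈ {0,1,…,K}, the set {0,1,…,2^m−1} \ (A_1 ∪ ⋯ ∪ A_k) of remaining free bins is a disjoint union of aligned blocks whose sizes are pairwise distinct powers of two (the empty set counting as such a union). -/

import Mathlib

/-!
Serve each request from the smallest free block that is large enough, halving that block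
repeatedly: one half is returned to the free set and the other half is split further, until a block
of the requested size `2 ^ n` is left. If the chosen block has size `2 ^ j`, the blocks returned
have sizes `2 ^ n, …, 2 ^ (j - 1)`, and none of these sizes was present before because `j` was
minimal. A large enough block exists because distinct powers of two below `2 ^ n` add up to less
than `2 ^ n`.
-/

/-- The aligned block of size `2^i` with index `c`: `{c·2^i, …, (c+1)·2^i−1}`. -/
def alignedBlock (i c : ℕ) : Finset ℕ := Finset.Ico (c * 2 ^ i) ((c + 1) * 2 ^ i)

/-- `F ⊆ {0,…,2^m−1}` is a disjoint union of aligned blocks whose sizes are pairwise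
distinct powers of two (the empty union being allowed). -/
def GoodFree (m : ℕ) (F : Finset ℕ) : Prop :=
  ∃ (E : Finset ℕ) (c : ℕ → ℕ),
    (∀ i ∈ E, i ≤ m ∧ c i < 2 ^ (m - i)) ∧
    (∀ i ∈ E, ∀ j ∈ E, i ≠ j → Disjoint (alignedBlock i (c i)) (alignedBlock j (c j))) ∧
    F = E.biUnion fun i => alignedBlock i (c i)

theorem card_alignedBlock (i c : ℕ) : (alignedBlock i c).card = 2 ^ i := by
  simp [alignedBlock, add_mul]

theorem alignedBlock_subset_range_iff {m i c : ℕ} :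
    alignedBlock i c ⊆ Finset.range (2 ^ m) ↔ i ≤ m ∧ c < 2 ^ (m - i) := by
  have nonempty : c * 2 ^ i < (c + 1) * 2 ^ i := by gcongr; exact c.lt_succ_self
  rw [alignedBlock, Finset.range_eq_Ico, Finset.Ico_subset_Ico_iff nonempty]
  simp only [zero_le, true_and]
  constructor
  · intro hle
    have him : i ≤ m := (Nat.pow_le_pow_iff_right one_lt_two).1
      ((Nat.le_mul_of_pos_left _ c.succ_pos).trans hle)
    rw [← Nat.sub_add_cancel him, pow_add] at hle
    exact ⟨him, Nat.le_of_mul_le_mul_right hle (by positivity)⟩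
  · rintro ⟨him, hc⟩
    calc (c + 1) * 2 ^ i ≤ 2 ^ (m - i) * 2 ^ i := Nat.mul_le_mul_right _ hc
      _ = 2 ^ m := pow_sub_mul_pow 2 him

theorem alignedBlock_zero_right (i : ℕ) : alignedBlock i 0 = Finset.range (2 ^ i) := by
  simp [alignedBlock]

theorem alignedBlock_succ (i c : ℕ) :
    alignedBlock (i + 1) c = alignedBlock i (2 * c) ∪ alignedBlock i (2 * c + 1) := by
  rw [alignedBlock, alignedBlock, alignedBlock,
    Finset.Ico_union_Ico_eq_Ico (by gcongr; omega) (by gcongr; omega)]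
  congr 1 <;> ring

theorem disjoint_alignedBlock_halves (i c : ℕ) :
    Disjoint (alignedBlock i (2 * c)) (alignedBlock i (2 * c + 1)) :=
  Finset.Ico_disjoint_Ico_consecutive _ _ _

/-- `F` is the disjoint union of aligned blocks, exactly one of size `2 ^ i` for each `i ∈ E`.
Unlike `GoodFree`, this records the sizes and imposes no ambient bound. -/
def IsBlockUnion (E F : Finset ℕ) : Prop :=
  ∃ c : ℕ → ℕ, (E : Set ℕ).PairwiseDisjoint (fun i => alignedBlock i (c i)) ∧
    F = E.biUnion fun i => alignedBlock i (c i)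

theorem goodFree_iff {m : ℕ} {F : Finset ℕ} :
    GoodFree m F ↔ F ⊆ Finset.range (2 ^ m) ∧ ∃ E, IsBlockUnion E F := by
  constructor
  · rintro ⟨E, c, bounds, disj, rfl⟩
    exact ⟨Finset.biUnion_subset.2 fun i hi => alignedBlock_subset_range_iff.2 (bounds i hi),
      E, c, disj, rfl⟩
  · rintro ⟨hF, E, c, disj, rfl⟩
    exact ⟨E, c, fun i hi => alignedBlock_subset_range_iff.1 (Finset.biUnion_subset.1 hF i hi),
      disj, rfl⟩

theorem isBlockUnion_singleton (i c : ℕ) : IsBlockUnion {i} (alignedBlock i c) :=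
  ⟨fun _ => c, by simp, by simp⟩

namespace IsBlockUnion

variable {E F : Finset ℕ} {i j n c : ℕ}

theorem card_eq (h : IsBlockUnion E F) : F.card = ∑ i ∈ E, 2 ^ i := by
  obtain ⟨c, disj, rfl⟩ := h
  rw [Finset.card_biUnion disj]
  simp only [card_alignedBlock]

theorem union_alignedBlock (h : IsBlockUnion E F) (hi : i ∉ E)
    (hF : Disjoint F (alignedBlock i c)) :
    IsBlockUnion (insert i E) (F ∪ alignedBlock i c) := by
  obtain ⟨d, disj, rfl⟩ := h
  have update_eq : ∀ k ∈ E, alignedBlock k (Function.update d i c k) = alignedBlock k (d k) :=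
    fun k hk => by rw [Function.update_of_ne (ne_of_mem_of_not_mem hk hi)]
  refine ⟨Function.update d i c, ?_, ?_⟩
  · rw [Finset.coe_insert, Set.pairwiseDisjoint_insert_of_notMem (mod_cast hi)]
    refine ⟨fun k hk l hl hkl => ?_, fun k hk => ?_⟩
    · simpa only [Function.onFun, update_eq k hk, update_eq l hl] using disj hk hl hkl
    · rw [update_eq k hk, Function.update_self]
      exact ((Finset.disjoint_biUnion_left _ _ _).1 hF k hk).symm
  · rw [Finset.biUnion_insert, Finset.biUnion_congr rfl update_eq, Function.update_self,
      Finset.union_comm]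

theorem exists_erase (h : IsBlockUnion E F) (hi : i ∈ E) :
    ∃ c, alignedBlock i c ⊆ F ∧ IsBlockUnion (E.erase i) (F \ alignedBlock i c) := by
  obtain ⟨c, disj, rfl⟩ := h
  refine ⟨c i, Finset.subset_biUnion_of_mem (fun k => alignedBlock k (c k)) hi,
    c, disj.subset (mod_cast E.erase_subset i), ?_⟩
  have rest_disj : Disjoint ((E.erase i).biUnion fun k => alignedBlock k (c k))
      (alignedBlock i (c i)) :=
    (Finset.disjoint_biUnion_left _ _ _).2 fun k hk =>
      disj (Finset.mem_of_mem_erase hk) hi (Finset.ne_of_mem_erase hk)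
  conv_lhs => rw [← Finset.insert_erase hi, Finset.biUnion_insert]
  exact Finset.union_sdiff_cancel_left rest_disj.symm

theorem exists_allocation_of_gap (h : IsBlockUnion E F) (hnj : n ≤ j)
    (gap : ∀ i ∈ E, n ≤ i → j ≤ i) (hF : Disjoint F (alignedBlock j c)) :
    ∃ a, alignedBlock n a ⊆ alignedBlock j c ∧
      ∃ E', IsBlockUnion E' ((F ∪ alignedBlock j c) \ alignedBlock n a) := by
  induction j, hnj using Nat.le_induction generalizing E F c with
  | base => exact ⟨c, subset_rfl, E, by rwa [Finset.union_sdiff_cancel_right hF]⟩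
  | succ j hnj ih =>
    rw [alignedBlock_succ, Finset.disjoint_union_right] at hF
    have left_returned : IsBlockUnion (insert j E) (F ∪ alignedBlock j (2 * c)) :=
      h.union_alignedBlock (fun hj => (gap j hj hnj).not_gt j.lt_succ_self) hF.1
    have new_gap : ∀ i ∈ insert j E, n ≤ i → j ≤ i :=
      (Finset.forall_mem_insert _ _ _).2
        ⟨fun _ => le_rfl, fun i hi hni => j.le_succ.trans (gap i hi hni)⟩
    have right_disjoint : Disjoint (F ∪ alignedBlock j (2 * c)) (alignedBlock j (2 * c + 1)) :=
      Finset.disjoint_union_left.2 ⟨hF.2, disjoint_alignedBlock_halves j c⟩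
    obtain ⟨a, ha, hE'⟩ := ih left_returned new_gap right_disjoint
    rw [alignedBlock_succ, ← Finset.union_assoc]
    exact ⟨a, ha.trans Finset.subset_union_right, hE'⟩

theorem exists_le_of_two_pow_le_card (h : IsBlockUnion E F) (hn : 2 ^ n ≤ F.card) :
    ∃ i ∈ E, n ≤ i := by
  by_contra! lt_n
  exact (Nat.geomSum_lt le_rfl lt_n).not_ge (h.card_eq ▸ hn)

theorem exists_allocation (h : IsBlockUnion E F) (hn : 2 ^ n ≤ F.card) :
    ∃ a, alignedBlock n a ⊆ F ∧ ∃ E', IsBlockUnion E' (F \ alignedBlock n a) := by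
  have large_block := h.exists_le_of_two_pow_le_card hn
  obtain ⟨hjE, hnj⟩ := Nat.find_spec large_block
  have gap : ∀ i ∈ E, n ≤ i → Nat.find large_block ≤ i :=
    fun i hi hni => Nat.find_min' large_block ⟨hi, hni⟩
  obtain ⟨c, hcF, rest⟩ := h.exists_erase hjE
  obtain ⟨a, ha, hE'⟩ := rest.exists_allocation_of_gap hnj
    (fun i hi => gap i (Finset.mem_of_mem_erase hi)) Finset.sdiff_disjoint
  rw [Finset.sdiff_union_of_subset hcF] at hE'
  exact ⟨a, ha.trans hcF, hE'⟩

end IsBlockUnion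

theorem goodFree_range_two_pow (m : ℕ) : GoodFree m (Finset.range (2 ^ m)) :=
  goodFree_iff.2 ⟨subset_rfl, {m}, alignedBlock_zero_right m ▸ isBlockUnion_singleton m 0⟩

theorem GoodFree.exists_allocation {m n : ℕ} {F : Finset ℕ} (hF : GoodFree m F)
    (hn : 2 ^ n ≤ F.card) :
    ∃ a, n ≤ m ∧ a < 2 ^ (m - n) ∧ alignedBlock n a ⊆ F ∧ GoodFree m (F \ alignedBlock n a) := by
  obtain ⟨hFm, E, hE⟩ := goodFree_iff.1 hF
  obtain ⟨a, haF, hE'⟩ := hE.exists_allocation hn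
  obtain ⟨hnm, ham⟩ := alignedBlock_subset_range_iff.1 (haF.trans hFm)
  exact ⟨a, hnm, ham, haF, goodFree_iff.2 ⟨Finset.sdiff_subset.trans hFm, hE'⟩⟩

section Greedy

variable {α : Type*} [DecidableEq α]

theorem sdiff_biUnion_range_succ' (S : Finset α) (A : ℕ → Finset α) (k : ℕ) :
    S \ (Finset.range (k + 1)).biUnion A =
      (S \ A 0) \ (Finset.range k).biUnion fun i => A (i + 1) := by
  rw [Finset.range_add_one', Finset.biUnion_insert, Finset.map_eq_image, Finset.image_biUnion,
    Finset.sdiff_union_distrib, ← Finset.sdiff_sdiff_left']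
  rfl

theorem exists_greedy_sequence {Invariant Admissible : ℕ → Finset α → Prop} {K : ℕ}
    {S : Finset α} (start : Invariant 0 S)
    (step : ∀ k < K, ∀ F, Invariant k F → ∃ B ⊆ F, Admissible k B ∧ Invariant (k + 1) (F \ B)) :
    ∃ A : ℕ → Finset α,
      (∀ k < K, Admissible k (A k) ∧ A k ⊆ S \ (Finset.range k).biUnion A) ∧
      ∀ k ≤ K, Invariant k (S \ (Finset.range k).biUnion A) := by
  induction K generalizing Invariant Admissible S with
  | zero => exact ⟨fun _ => ∅, by simp, by simpa using start⟩
  | succ K ih =>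
    obtain ⟨B, hBS, hB, next⟩ := step 0 K.succ_pos S start
    obtain ⟨A, hA, h_inv⟩ := ih (Invariant := fun k => Invariant (k + 1))
      (Admissible := fun k => Admissible (k + 1)) next
      fun k hk => step (k + 1) (Nat.succ_lt_succ hk)
    refine ⟨fun | 0 => B | k + 1 => A k, ?_, ?_⟩
    · rintro (_ | k) hk
      · exact ⟨hB, by simpa using hBS⟩
      · rw [sdiff_biUnion_range_succ']
        exact hA k (Nat.lt_of_succ_lt_succ hk)
    · rintro (_ | k) hk
      · simpa using start
      · rw [sdiff_biUnion_range_succ']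
        exact h_inv k (Nat.le_of_succ_le_succ hk)

theorem pairwiseDisjoint_of_disjoint_biUnion_range {K : ℕ} {A : ℕ → Finset α}
    (hA : ∀ k < K, Disjoint (A k) ((Finset.range k).biUnion A)) :
    (Set.Iio K).PairwiseDisjoint A := by
  have later_disjoint : ∀ k l, l < k → k < K → Disjoint (A k) (A l) := fun k l hlk hk =>
    (hA k hk).mono_right (Finset.subset_biUnion_of_mem A (Finset.mem_range.2 hlk))
  intro k hk l hl hkl
  rcases hkl.lt_or_gt with hlt | hgt
  · exact (later_disjoint l k hlt hl).symm
  · exact later_disjoint k l hgt hk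

end Greedy

/-- Theorem 2 (the min-small-change policy enables fully loaded IFDMA systems):
power-of-two requests `N_1, …, N_K` with `∑ N_k ≤ 2^m`, presented in arbitrary order,
can be granted pairwise disjoint aligned blocks such that after every allocation the
set of remaining free bins is a disjoint union of aligned blocks with pairwise
distinct power-of-two sizes. -/
theorem min_small_change_full_loading (m K : ℕ) (N : ℕ → ℕ)
    (hpow : ∀ k < K, ∃ n ≤ m, N k = 2 ^ n)
    (hsum : ∑ k ∈ Finset.range K, N k ≤ 2 ^ m) :
    ∃ A : ℕ → Finset ℕ,
      (∀ k < K, ∃ i a, i ≤ m ∧ a < 2 ^ (m - i) ∧ N k = 2 ^ i ∧ A k = alignedBlock i a) ∧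
      (∀ k < K, ∀ l < K, k ≠ l → Disjoint (A k) (A l)) ∧
      (∀ k ≤ K, GoodFree m (Finset.range (2 ^ m) \ (Finset.range k).biUnion A)) := by
  obtain ⟨A, hA, hfree⟩ := exists_greedy_sequence
    (Invariant := fun k F => GoodFree m F ∧ ∑ l ∈ Finset.Ico k K, N l ≤ F.card)
    (Admissible := fun k B =>
      ∃ i a, i ≤ m ∧ a < 2 ^ (m - i) ∧ N k = 2 ^ i ∧ B = alignedBlock i a)
    (K := K) (S := Finset.range (2 ^ m))
    (start := ⟨goodFree_range_two_pow m, by rwa [← Finset.range_eq_Ico, Finset.card_range]⟩)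
    (step := by
      rintro k hk F ⟨hF, demand⟩
      obtain ⟨n, -, hN⟩ := hpow k hk
      rw [Finset.sum_eq_sum_Ico_succ_bot hk, hN] at demand
      obtain ⟨a, hnm, ham, haF, hF'⟩ := hF.exists_allocation (le_of_add_le_left demand)
      refine ⟨alignedBlock n a, haF, ⟨n, a, hnm, ham, hN, rfl⟩, hF', ?_⟩
      rw [Finset.card_sdiff_of_subset haF, card_alignedBlock]
      exact Nat.le_sub_of_add_le' demand)
  exact ⟨A, fun k hk => (hA k hk).1,
    pairwiseDisjoint_of_disjoint_biUnion_range fun k hk =>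
      Finset.sdiff_disjoint.mono_left (hA k hk).2,
    fun k hk => (hfree k hk).1⟩
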